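/- Let c be a recurrent chip configuration. Then (ĉ)° is s-recurrent, there exists t ∈ ℕ such that c ~ φ((ĉ)°) + t·δ_s, and lvl(c) ≥ slvl((ĉ)°). -/

import Mathlib

open Finset Polynomial

namespace SandpileBM

variable {V E : Type} [Fintype V] [DecidableEq V] [Fintype E] [DecidableEq E]

/-- The number of edges from `v` to `w` in the multigraph given by `src`, `tgt`. -/
def numEdges (src tgt : E → V) (v w : V) : ℕ :=
  (Finset.univ.filter fun e => src e = v ∧ tgt e = w).card

/-- The out-degree of a vertex. -/
def outdeg (src : E → V) (v : V) : ℕ :=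
  (Finset.univ.filter fun e => src e = v).card

/-- The in-degree of a vertex. -/
def indeg (tgt : E → V) (v : V) : ℕ :=
  (Finset.univ.filter fun e => tgt e = v).card

/-- The digraph is strongly connected: any vertex is reachable from any other by
a directed path. -/
def StronglyConnected (src tgt : E → V) : Prop :=
  ∀ v w : V, Relation.ReflTransGen (fun a b => ∃ e : E, src e = a ∧ tgt e = b) v w

/-- Result of firing the vertex `v` on the chip configuration `c` (sinkless model). -/
def fire (src tgt : E → V) (c : V → ℕ) (v : V) : V → ℕ :=
  fun w => c w + numEdges src tgt v w - (if w = v then outdeg src v else 0)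

/-- One legal firing move in the sinkless model. -/
def FireStep (src tgt : E → V) (c d : V → ℕ) : Prop :=
  ∃ v : V, outdeg src v ≤ c v ∧ d = fire src tgt c v

/-- `Reach c d`: `d` is obtained from `c` by a finite sequence of legal firing moves. -/
def Reach (src tgt : E → V) : (V → ℕ) → (V → ℕ) → Prop :=
  Relation.ReflTransGen (FireStep src tgt)

/-- Stability of a chip configuration. -/
def Stable (src : E → V) (c : V → ℕ) : Prop :=
  ∀ v : V, c v < outdeg src v

/-- A chip configuration is recurrent if it is not stable and every configuration
accessible from it can reach it back. -/
def Recurrent (src tgt : E → V) (c : V → ℕ) : Prop :=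
  ¬ Stable src c ∧ ∀ d : V → ℕ, Reach src tgt c d → Reach src tgt d c

/-- Level (total number of chips) of a chip configuration. -/
def lvl (c : V → ℕ) : ℕ := ∑ v : V, c v

/-- Indicator function of the vertex `s`. -/
def deltaS (s : V) : V → ℕ := fun v => if v = s then 1 else 0

/-- Result of firing the vertex `v` on an `s`-configuration. -/
def sfire (src tgt : E → V) (s : V) (c : {v : V // v ≠ s} → ℕ) (v : {v : V // v ≠ s}) :
    {v : V // v ≠ s} → ℕ :=
  fun w => c w + numEdges src tgt v.1 w.1 - (if w = v then outdeg src v.1 else 0)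

/-- One legal s-firing move. -/
def SFireStep (src tgt : E → V) (s : V) (c d : {v : V // v ≠ s} → ℕ) : Prop :=
  ∃ v : {v : V // v ≠ s}, outdeg src v.1 ≤ c v ∧ d = sfire src tgt s c v

/-- `SReach c d`: `d` is obtained from `c` by a finite sequence of legal s-firing moves. -/
def SReach (src tgt : E → V) (s : V) :
    ({v : V // v ≠ s} → ℕ) → ({v : V // v ≠ s} → ℕ) → Prop :=
  Relation.ReflTransGen (SFireStep src tgt s)

/-- Stability of an `s`-configuration. -/
def SStable (src : E → V) (s : V) (c : {v : V // v ≠ s} → ℕ) : Prop :=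
  ∀ v : {v : V // v ≠ s}, c v < outdeg src v.1

/-- The stabilization `c°` of an `s`-configuration: the (for strongly connected digraphs,
unique) stable `s`-configuration reachable from `c` by legal s-firing moves. -/
noncomputable def stab (src tgt : E → V) (s : V) (c : {v : V // v ≠ s} → ℕ) :
    {v : V // v ≠ s} → ℕ :=
  Classical.epsilon fun d => SReach src tgt s c d ∧ SStable src s d

/-- An `s`-configuration `c` is s-recurrent if every `s`-configuration can be completed
to one whose stabilization is `c`. -/
def SRecurrent (src tgt : E → V) (s : V) (c : {v : V // v ≠ s} → ℕ) : Prop :=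
  ∀ c₁ : {v : V // v ≠ s} → ℕ, ∃ c₂ : {v : V // v ≠ s} → ℕ,
    stab src tgt s (c₁ + c₂) = c

/-- `β_s`, recording the number of edges from `s` to each other vertex. -/
def betaS (src tgt : E → V) (s : V) : {v : V // v ≠ s} → ℕ :=
  fun v => numEdges src tgt s v.1

/-- The relation `~_s` on s-recurrent configurations: `d = (c + k·β_s)°` for some `k`. -/
def SEquiv (src tgt : E → V) (s : V) (c d : {v : V // v ≠ s} → ℕ) : Prop :=
  ∃ k : ℕ, stab src tgt s (c + k • betaS src tgt s) = d

/-- Restriction of a chip configuration to `V ∖ {s}`. -/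
def restrictS (s : V) (c : V → ℕ) : {v : V // v ≠ s} → ℕ := fun v => c v.1

/-- Extension `c̄` of an `s`-configuration by `0` at `s`. -/
def extendS (s : V) (c : {v : V // v ≠ s} → ℕ) : V → ℕ :=
  fun v => if h : v = s then 0 else c ⟨v, h⟩

/-- The s-index `χ(c)`: the least `k` such that `c̄ + k·δ_s` is recurrent. -/
noncomputable def sIndex (src tgt : E → V) (s : V) (c : {v : V // v ≠ s} → ℕ) : ℕ :=
  sInf {k : ℕ | Recurrent src tgt (extendS s c + k • deltaS s)}

/-- `φ(c) := c̄ + χ(c)·δ_s`. -/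
noncomputable def phi (src tgt : E → V) (s : V) (c : {v : V // v ≠ s} → ℕ) : V → ℕ :=
  extendS s c + sIndex src tgt s c • deltaS s

/-- The s-level `slvl(c) := χ(c) + Σ_{v ≠ s} c(v)`. -/
noncomputable def slvl (src tgt : E → V) (s : V) (c : {v : V // v ≠ s} → ℕ) : ℕ :=
  sIndex src tgt s c + ∑ v : {v : V // v ≠ s}, c v

/-- The d-level `dlvl(c) := deg⁺(s) + Σ_{v ≠ s} c(v)`. -/
def dlvl (src : E → V) (s : V) (c : {v : V // v ≠ s} → ℕ) : ℕ :=
  outdeg src s + ∑ v : {v : V // v ≠ s}, c v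

/-- The set (as a type) of recurrent chip configurations. -/
abbrev RecL (src tgt : E → V) := {c : V → ℕ // Recurrent src tgt c}

/-- The setoid on recurrent configurations generated by the relation `~` (i.e. `⤳`). -/
def recLSetoid (src tgt : E → V) : Setoid (RecL src tgt) :=
  Relation.EqvGen.setoid fun a b => Reach src tgt a.1 b.1

/-- The set of `~`-classes of recurrent configurations. -/
abbrev RecLQuot (src tgt : E → V) := Quotient (recLSetoid src tgt)

/-- The set (as a type) of s-recurrent configurations. -/
abbrev RecS (src tgt : E → V) (s : V) := {c : {v : V // v ≠ s} → ℕ // SRecurrent src tgt s c}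

/-- The setoid on s-recurrent configurations generated by the relation `~_s`. -/
def recSSetoid (src tgt : E → V) (s : V) : Setoid (RecS src tgt s) :=
  Relation.EqvGen.setoid fun a b => SEquiv src tgt s a.1 b.1

/-- The set of `~_s`-classes of s-recurrent configurations. -/
abbrev RecSQuot (src tgt : E → V) (s : V) := Quotient (recSSetoid src tgt s)

/-- The level of a `~`-class of recurrent configurations (level is constant on classes). -/
noncomputable def lvlClass (src tgt : E → V) (q : RecLQuot src tgt) : ℕ :=
  sSup ((fun c : RecL src tgt => lvl c.1) '' {c | Quotient.mk (recLSetoid src tgt) c = q})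

/-- The s-level of a `~_s`-class (s-level is constant on classes). -/
noncomputable def slvlClass (src tgt : E → V) (s : V) (q : RecSQuot src tgt s) : ℕ :=
  sSup ((fun c : RecS src tgt s => slvl src tgt s c.1) ''
    {c | Quotient.mk (recSSetoid src tgt s) c = q})

/-- The d-level of a `~_s`-class: the maximum d-level over the class. -/
noncomputable def dlvlClass (src tgt : E → V) (s : V) (q : RecSQuot src tgt s) : ℕ :=
  sSup ((fun c : RecS src tgt s => dlvl src s c.1) ''
    {c | Quotient.mk (recSSetoid src tgt s) c = q})

/-- The Biggs–Merino polynomial `B(G,s;y) = Σ_{[c] ∈ Rec(G,s)/~_s} y^{dlvl([c])}`. -/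
noncomputable def BM (src tgt : E → V) (s : V) : Polynomial ℤ :=
  ∑ᶠ q : RecSQuot src tgt s, X ^ dlvlClass src tgt s q

/-- `LegalSeq l c d`: firing the vertices in the list `l` in order is a sequence of
legal firing moves transforming `c` into `d` (sinkless model). -/
def LegalSeq (src tgt : E → V) : List V → (V → ℕ) → (V → ℕ) → Prop
  | [], c, d => d = c
  | v :: l, c, d => outdeg src v ≤ c v ∧ LegalSeq src tgt l (fire src tgt c v) d

/-- `SLegalSeq l c d`: firing the vertices in the list `l` in order is a sequence of
legal s-firing moves transforming `c` into `d`. -/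
def SLegalSeq (src tgt : E → V) (s : V) :
    List {v : V // v ≠ s} → ({v : V // v ≠ s} → ℕ) → ({v : V // v ≠ s} → ℕ) → Prop
  | [], c, d => d = c
  | v :: l, c, d => outdeg src v.1 ≤ c v ∧ SLegalSeq src tgt s l (sfire src tgt s c v) d

/-- The configuration obtained from `c` after firing the vertices of `l` in order. -/
def iterFire (src tgt : E → V) (c : V → ℕ) (l : List V) : V → ℕ :=
  l.foldl (fire src tgt) c

/-- The Laplacian of the digraph applied to an integer vector:
`(Δq)(v) = deg⁺(v)·q(v) − Σ_w A(w,v)·q(w)`. -/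
def lapApply (src tgt : E → V) (q : V → ℤ) : V → ℤ :=
  fun v => (outdeg src v : ℤ) * q v - ∑ w : V, (numEdges src tgt w v : ℤ) * q w

/-- `r` is the primitive period vector of the digraph: it has positive entries with
gcd `1`, lies in the kernel of the Laplacian, and generates this kernel. -/
def IsPeriodVector (src tgt : E → V) (r : V → ℕ) : Prop :=
  (∀ v : V, 0 < r v) ∧ Finset.univ.gcd r = 1 ∧
    lapApply src tgt (fun v => (r v : ℤ)) = 0 ∧
    ∀ q : V → ℤ, lapApply src tgt q = 0 → ∃ k : ℤ, q = k • fun v => (r v : ℤ)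

/-- The Laplacian matrix of the digraph. -/
def lapMatrix (src tgt : E → V) : Matrix V V ℤ :=
  Matrix.of fun v w =>
    if v = w then (outdeg src v : ℤ) - numEdges src tgt v v
    else -(numEdges src tgt w v : ℤ)

/-- The determinant of the reduced Laplacian obtained by deleting the row and
column indexed by `v`. -/
def reducedLapDet (src tgt : E → V) (v : V) : ℤ :=
  (((lapMatrix src tgt).submatrix (fun a : {w : V // w ≠ v} => a.1)
    (fun a : {w : V // w ≠ v} => a.1)).det)

/-- The period constant `α := gcd_{v ∈ V} det Δ_v`. -/
def periodConstant (src tgt : E → V) : ℤ :=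
  Finset.univ.gcd (reducedLapDet src tgt)

/-- `IsWalk l a b`: the list of edges `l` forms a directed walk from `a` to `b`. -/
def IsWalk (src tgt : E → V) : List E → V → V → Prop
  | [], a, b => a = b
  | e :: l, a, b => src e = a ∧ IsWalk src tgt l (tgt e) b

/-- `IsPath l a b`: the list of edges `l` forms a directed path from `a` to `b`:
all visited vertices are distinct (except that the final vertex is allowed to
coincide with the starting vertex). -/
def IsPath (src tgt : E → V) (l : List E) (a b : V) : Prop :=
  IsWalk src tgt l a b ∧ (l.map tgt).Nodup ∧ a ∉ (l.map tgt).dropLast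

/-- `T` is an arborescence rooted at `s`: for every vertex `v` there is a unique
directed path from `s` to `v` using only edges of `T`. -/
def IsArborescence (src tgt : E → V) (s : V) (T : Finset E) : Prop :=
  ∀ v : V, ∃! l : List E, (∀ e ∈ l, e ∈ T) ∧ IsPath src tgt l s v

/-- The edge `e ∉ T` is externally active for the arborescence `T` (w.r.t. the linear
order on `E`): where `P₁`, `P₂` are the two edge-disjoint directed paths in `T ∪ {e}`
sharing their starting vertex and ending at `tgt e`, with `e ∈ P₁`, the smallest edge
on `P₁ ++ P₂` lies on `P₁`. -/
def ExtActive [LinearOrder E] (src tgt : E → V) (T : Finset E) (e : E) : Prop :=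
  e ∉ T ∧ ∃ (u : V) (p₁ p₂ : List E),
    (∀ f ∈ p₁, f ∈ T ∨ f = e) ∧ (∀ f ∈ p₂, f ∈ T ∨ f = e) ∧
    IsPath src tgt p₁ u (tgt e) ∧ IsPath src tgt p₂ u (tgt e) ∧
    e ∈ p₁ ∧ (∀ f ∈ p₁, f ∉ p₂) ∧
    ∃ fmin ∈ p₁, ∀ f ∈ p₁ ++ p₂, fmin ≤ f

/-- The external activity `e(T)` of an arborescence `T`. -/
noncomputable def extActivity [LinearOrder E] (src tgt : E → V) (T : Finset E) : ℕ :=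
  Nat.card {e : E // ExtActive src tgt T e}

/-- The greedoid Tutte polynomial `T(G,s;y) = Σ_{T ∈ A(G,s)} y^{e(T)}`. -/
noncomputable def greedoidTutte [LinearOrder E] (src tgt : E → V) (s : V) : Polynomial ℤ :=
  ∑ᶠ T : {T : Finset E // IsArborescence src tgt s T}, X ^ extActivity src tgt T.1

/-- `f` is a `G^r`-parking function rooted at `s`. -/
def IsParking (src tgt : E → V) (s : V) (f : {v : V // v ≠ s} → ℕ) : Prop :=
  ∀ A : Finset {v : V // v ≠ s}, A.Nonempty →
    ∃ v ∈ A, f v < Nat.card {e : E // (∀ w ∈ A, src e ≠ w.1) ∧ tgt e = v.1}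

/-- The d-level of a `G^r`-parking function: `|E| − |V| + 1 − Σ_{v≠s} f(v)`. -/
noncomputable def parkDlvl (src : E → V) (s : V) (f : {v : V // v ≠ s} → ℕ) : ℕ :=
  ((Fintype.card E : ℤ) - Fintype.card V + 1 - ∑ v : {v : V // v ≠ s}, (f v : ℤ)).toNat

/-- `σ` is an s-decreasing traversal: a sequence in which every vertex and edge of `G`
appears exactly once, satisfying (R1) every vertex other than `s` is immediately
preceded by an edge targeting it, and (R2) every edge is the `<ₑ`-maximum edge not yet
seen whose source has been seen. -/
def IsTraversal [LinearOrder E] (src tgt : E → V) (s : V) (σ : List (V ⊕ E)) : Prop :=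
  σ.Nodup ∧ (∀ x : V ⊕ E, x ∈ σ) ∧
  (∀ (i : ℕ) (hi : i < σ.length) (v : V),
      σ.get ⟨i, hi⟩ = Sum.inl v → v ≠ s →
      0 < i ∧ ∃ e : E, tgt e = v ∧ σ.get ⟨i - 1, by omega⟩ = Sum.inr e) ∧
  (∀ (i : ℕ) (hi : i < σ.length) (e : E),
      σ.get ⟨i, hi⟩ = Sum.inr e →
      Sum.inl (src e) ∈ σ.take i ∧
      ∀ f : E, Sum.inr f ∉ σ.take i → Sum.inl (src f) ∈ σ.take i → f ≤ e)

open scoped Classical in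
/-- `Υ(σ)`: the set of edges immediately preceding a non-sink vertex in `σ`. -/
noncomputable def Upsilon (src tgt : E → V) (s : V) (σ : List (V ⊕ E)) : Finset E :=
  Finset.univ.filter fun e =>
    ∃ (i : ℕ) (hi : i < σ.length) (v : V), v ≠ s ∧ σ.get ⟨i, hi⟩ = Sum.inl v ∧
      0 < i ∧ ∃ hj : i - 1 < σ.length, σ.get ⟨i - 1, hj⟩ = Sum.inr e

/-- The strength of `σ`: the number of strong edges, i.e. edges whose target appears
before them in `σ`. -/
noncomputable def strength (tgt : E → V) (σ : List (V ⊕ E)) : ℕ :=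
  Nat.card {e : E // ∃ (i : ℕ) (hi : i < σ.length),
    σ.get ⟨i, hi⟩ = Sum.inr e ∧ Sum.inl (tgt e) ∈ σ.take i}

/-- `Ψ(σ)(v)`: one less than the number of edges targeting `v` that appear before the
vertex `v` in `σ`. -/
def Psi (tgt : E → V) (s : V) (σ : List (V ⊕ E)) : {v : V // v ≠ s} → ℕ :=
  fun v =>
    (((σ.takeWhile fun x => x ≠ Sum.inl v.1).filterMap Sum.getRight?).filter
      fun e => tgt e = v.1).length - 1

/-!
Firing legally at vertices other than `s` turns `c` into a configuration `d` whose restriction is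
`(ĉ)°`; then `d` is recurrent as well, and `lvl d = lvl c`. Since `d = c̄' + d(s)·δ_s` with
`c' = (ĉ)°`, minimality of the index gives `χ(c') ≤ d(s)`, hence the last two claims.

For the `s`-recurrence of `c'`, follow a nonempty legal loop at `d`. A vertex that never fires along
it cannot lose chips, so none of its in-neighbours fires either; hence every vertex fires. Seen from
outside `s`, the loop shows that `c' + m·β_s` stabilizes to `c'`, where `m > 0` counts the firings
of `s`. A large multiple of `β_s` can be spread over any prescribed `s`-configuration, and by
confluence this does not affect the stabilization.
-/

section Firing

omit [Fintype V] [DecidableEq E]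

variable {src tgt : E → V} {s v w : V}

/-- There is a directed path from `v` to `w`. The relation is the one in `StronglyConnected`, so
that `StronglyConnected src tgt` unfolds to `∀ v w, HasPath src tgt v w`. -/
def HasPath (src tgt : E → V) : V → V → Prop :=
  Relation.ReflTransGen fun a b => ∃ e : E, src e = a ∧ tgt e = b

theorem numEdges_src_tgt_pos (src tgt : E → V) (e : E) :
    0 < numEdges src tgt (src e) (tgt e) :=
  card_pos.2 ⟨e, by simp⟩

theorem fire_apply_of_ne (c : V → ℕ) (h : w ≠ v) :
    fire src tgt c v w = c w + numEdges src tgt v w := by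
  simp [fire, h]

theorem fire_add_single {c : V → ℕ} (h : outdeg src v ≤ c v) :
    fire src tgt c v + Pi.single v (outdeg src v) = c + numEdges src tgt v := by
  funext w
  by_cases hw : w = v
  · subst hw
    simp only [Pi.add_apply, Pi.single_eq_same, fire, if_true]
    omega
  · simp [fire_apply_of_ne c hw, hw]

theorem restrictS_fire_of_ne (c : V → ℕ) (hv : v ≠ s) :
    restrictS s (fire src tgt c v) = sfire src tgt s (restrictS s c) ⟨v, hv⟩ := by
  funext w
  simp only [restrictS, fire, sfire, Subtype.ext_iff]

theorem restrictS_fire_self (s : V) (c : V → ℕ) :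
    restrictS s (fire src tgt c s) = restrictS s c + betaS src tgt s :=
  funext fun w => fire_apply_of_ne c w.2

theorem Recurrent.of_reach {c d : V → ℕ} (hc : Recurrent src tgt c) (hcd : Reach src tgt c d) :
    Recurrent src tgt d := by
  refine ⟨fun hd => ?_, fun e hde => (hc.2 e (hcd.trans hde)).trans hcd⟩
  rcases (hc.2 d hcd).cases_head with rfl | ⟨-, ⟨v, hv, -⟩, -⟩
  · exact hc.1 hd
  · exact (hd v).not_ge hv

end Firing

section LegalSeq

omit [Fintype V] [DecidableEq E]

variable {src tgt : E → V} {v w : V} {c d : V → ℕ} {l : List V}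

theorem reach_iff_exists_legalSeq : Reach src tgt c d ↔ ∃ l, LegalSeq src tgt l c d := by
  constructor
  · intro h
    induction h using Relation.ReflTransGen.head_induction_on with
    | refl => exact ⟨[], rfl⟩
    | head hstep _ ih =>
      obtain ⟨v, hv, rfl⟩ := hstep
      obtain ⟨l, hl⟩ := ih
      exact ⟨v :: l, hv, hl⟩
  · rintro ⟨l, hl⟩
    induction l generalizing c with
    | nil => exact hl ▸ .refl
    | cons v l ih => exact .head ⟨v, hl.1, rfl⟩ (ih hl.2)

theorem LegalSeq.le_of_notMem (h : LegalSeq src tgt l c d) (hw : w ∉ l) : c w ≤ d w := by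
  induction l generalizing c with
  | nil => exact (congrFun h w).ge
  | cons u l ih =>
    rw [List.mem_cons, not_or] at hw
    calc c w ≤ fire src tgt c u w := by simp [fire_apply_of_ne c hw.1]
      _ ≤ d w := ih h.2 hw.2

theorem LegalSeq.lt_of_notMem (h : LegalSeq src tgt l c d) (hw : w ∉ l) (hv : v ∈ l)
    (hvw : 0 < numEdges src tgt v w) : c w < d w := by
  induction l generalizing c with
  | nil => exact absurd hv List.not_mem_nil
  | cons u l ih =>
    rw [List.mem_cons, not_or] at hw
    have hfire := fire_apply_of_ne (src := src) (tgt := tgt) c hw.1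
    rcases List.mem_cons.1 hv with rfl | hv
    · have := LegalSeq.le_of_notMem h.2 hw.2
      omega
    · have := ih h.2 hw.2 hv
      omega

theorem LegalSeq.mem_of_hasPath (h : LegalSeq src tgt l c c) (hv : v ∈ l)
    (hvw : HasPath src tgt v w) : w ∈ l := by
  induction hvw with
  | refl => exact hv
  | tail _ he ih =>
    obtain ⟨e, rfl, rfl⟩ := he
    by_contra hw
    exact (h.lt_of_notMem hw ih (numEdges_src_tgt_pos src tgt e)).false

theorem Recurrent.exists_legalSeq_self (hc : Recurrent src tgt c) :
    ∃ l ≠ [], LegalSeq src tgt l c c := by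
  obtain ⟨v, hv⟩ : ∃ v, outdeg src v ≤ c v := by simpa [Stable] using hc.1
  obtain ⟨l, hl⟩ := reach_iff_exists_legalSeq.1 (hc.2 _ (.single ⟨v, hv, rfl⟩))
  exact ⟨v :: l, List.cons_ne_nil v l, hv, hl⟩

end LegalSeq

section SFiring

omit [Fintype V] [DecidableEq E]

variable {src tgt : E → V} {s : V} {a a' b b' x : {v : V // v ≠ s} → ℕ} {v w : {v : V // v ≠ s}}

theorem sfire_apply_of_ne (a : {v : V // v ≠ s} → ℕ) (h : w ≠ v) :
    sfire src tgt s a v w = a w + numEdges src tgt v.1 w.1 := by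
  simp [sfire, h]

theorem sfire_add (x : {v : V // v ≠ s} → ℕ) (h : outdeg src v.1 ≤ a v) :
    sfire src tgt s (a + x) v = sfire src tgt s a v + x := by
  funext w
  by_cases hw : w = v
  · subst hw
    simp only [sfire, Pi.add_apply, if_true]
    omega
  · simp only [sfire_apply_of_ne _ hw, Pi.add_apply]
    omega

theorem sfire_comm (hv : outdeg src v.1 ≤ a v) (hw : outdeg src w.1 ≤ a w) :
    sfire src tgt s (sfire src tgt s a v) w = sfire src tgt s (sfire src tgt s a w) v := by
  funext u
  grind [sfire]

theorem SFireStep.diamond (hb : SFireStep src tgt s a b) (hb' : SFireStep src tgt s a b') :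
    b = b' ∨ ∃ d, SFireStep src tgt s b d ∧ SFireStep src tgt s b' d := by
  obtain ⟨v, hv, rfl⟩ := hb
  obtain ⟨w, hw, rfl⟩ := hb'
  rcases eq_or_ne v w with rfl | hvw
  · exact .inl rfl
  · refine .inr ⟨_, ⟨w, ?_, rfl⟩, ⟨v, ?_, sfire_comm hv hw⟩⟩
    · rw [sfire_apply_of_ne a hvw.symm]
      omega
    · rw [sfire_apply_of_ne a hvw]
      omega

theorem SReach.join (hb : SReach src tgt s a b) (hb' : SReach src tgt s a b') :
    ∃ d, SReach src tgt s b d ∧ SReach src tgt s b' d := by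
  refine Relation.church_rosser (fun a b b' hb hb' => ?_) hb hb'
  rcases hb.diamond hb' with rfl | ⟨d, hd, hd'⟩
  · exact ⟨b, .refl, .refl⟩
  · exact ⟨d, .single hd, .single hd'⟩

theorem SReach.eq_of_sStable (h : SReach src tgt s a b) (ha : SStable src s a) : b = a := by
  rcases h.cases_head with rfl | ⟨-, ⟨v, hv, -⟩, -⟩
  · rfl
  · exact absurd hv (ha v).not_ge

theorem SReach.of_sStable (hb : SReach src tgt s a b) (hb' : SReach src tgt s a b')
    (hs : SStable src s b') : SReach src tgt s b b' := by
  obtain ⟨d, hbd, hbd'⟩ := hb.join hb'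
  rwa [hbd'.eq_of_sStable hs] at hbd

theorem SReach.stab_eq (h : SReach src tgt s a b) (hb : SStable src s b) :
    stab src tgt s a = b := by
  obtain ⟨hreach, hstable⟩ : SReach src tgt s a (stab src tgt s a) ∧
      SStable src s (stab src tgt s a) :=
    Classical.epsilon_spec (p := fun d => SReach src tgt s a d ∧ SStable src s d) ⟨b, h, hb⟩
  exact (h.of_sStable hreach hstable).eq_of_sStable hb

theorem SReach.add_right (h : SReach src tgt s a b) (x : {v : V // v ≠ s} → ℕ) :
    SReach src tgt s (a + x) (b + x) := by
  refine Relation.ReflTransGen.lift (· + x) ?_ _ _ h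
  rintro c - ⟨v, hv, rfl⟩
  exact ⟨v, le_add_right hv, (sfire_add x hv).symm⟩

theorem SReach.add (h : SReach src tgt s a b) (h' : SReach src tgt s a' b') :
    SReach src tgt s (a + a') (b + b') := by
  have hb := h'.add_right b
  rw [add_comm a', add_comm b'] at hb
  exact (h.add_right a').trans hb

theorem SReach.sum {ι : Type*} {t : Finset ι} {f g : ι → {v : V // v ≠ s} → ℕ}
    (h : ∀ i, SReach src tgt s (f i) (g i)) :
    SReach src tgt s (∑ i ∈ t, f i) (∑ i ∈ t, g i) :=
  sum_hom_rel .refl fun i _ _ hsum => (h i).add hsum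

theorem SReach.nsmul (h : SReach src tgt s a b) (n : ℕ) : SReach src tgt s (n • a) (n • b) := by
  simpa using SReach.sum (t := range n) fun _ => h

theorem SReach.add_nsmul (h : SReach src tgt s (a + x) a) (n : ℕ) :
    SReach src tgt s (a + n • x) a := by
  induction n with
  | zero => rw [zero_nsmul, add_zero]; exact .refl
  | succ n ih =>
    rw [succ_nsmul', ← add_assoc]
    exact (h.add_right (n • x)).trans ih

theorem SReach.exists_sLegalSeq (h : SReach src tgt s a b) :
    ∃ l, SLegalSeq src tgt s l a b := by
  induction h using Relation.ReflTransGen.head_induction_on with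
  | refl => exact ⟨[], rfl⟩
  | head hstep _ ih =>
    obtain ⟨v, hv, rfl⟩ := hstep
    obtain ⟨l, hl⟩ := ih
    exact ⟨v :: l, hv, hl⟩

end SFiring

section Restriction

omit [Fintype V] [DecidableEq E]

variable {src tgt : E → V} {s : V} {c d : V → ℕ}

omit [Fintype E] in
theorem restrictS_extendS (a : {v : V // v ≠ s} → ℕ) : restrictS s (extendS s a) = a :=
  funext fun v => dif_neg v.2

omit [Fintype E] in
theorem extendS_restrictS_add (s : V) (c : V → ℕ) :
    extendS s (restrictS s c) + c s • deltaS s = c := by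
  funext v
  by_cases hv : v = s
  · subst hv
    simp [extendS, deltaS]
  · simp [extendS, deltaS, restrictS, hv]

theorem SLegalSeq.exists_legalSeq {l : List {v : V // v ≠ s}} {b : {v : V // v ≠ s} → ℕ}
    (h : SLegalSeq src tgt s l (restrictS s c) b) :
    ∃ d, LegalSeq src tgt (l.map Subtype.val) c d ∧ restrictS s d = b := by
  induction l generalizing c with
  | nil => exact ⟨c, rfl, h.symm⟩
  | cons v l ih =>
    obtain ⟨hv, hl⟩ := h
    rw [← restrictS_fire_of_ne c v.2] at hl
    obtain ⟨d, hd, hdb⟩ := ih hl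
    exact ⟨d, ⟨hv, hd⟩, hdb⟩

theorem SReach.exists_reach {b : {v : V // v ≠ s} → ℕ} (h : SReach src tgt s (restrictS s c) b) :
    ∃ d, Reach src tgt c d ∧ restrictS s d = b := by
  obtain ⟨l, hl⟩ := h.exists_sLegalSeq
  obtain ⟨d, hd, hdb⟩ := hl.exists_legalSeq
  exact ⟨d, reach_iff_exists_legalSeq.2 ⟨_, hd⟩, hdb⟩

theorem LegalSeq.sReach_restrictS {l : List V} (h : LegalSeq src tgt l c d) (s : V) :
    SReach src tgt s (restrictS s c + l.count s • betaS src tgt s) (restrictS s d) := by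
  induction l generalizing c with
  | nil =>
    obtain rfl : d = c := h
    rw [List.count_nil, zero_nsmul, add_zero]
    exact .refl
  | cons v l ih =>
    have htail := ih h.2
    by_cases hv : v = s
    · subst hv
      rwa [List.count_cons_self, succ_nsmul', ← add_assoc, ← restrictS_fire_self]
    · rw [List.count_cons_of_ne hv]
      rw [restrictS_fire_of_ne c hv] at htail
      have hstep : SReach src tgt s (restrictS s c) (sfire src tgt s (restrictS s c) ⟨v, hv⟩) :=
        .single ⟨⟨v, hv⟩, h.1, rfl⟩
      exact (hstep.add_right _).trans htail

theorem Recurrent.exists_sReach_add_nsmul_betaS (hc : Recurrent src tgt c)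
    (hs : ∀ v, HasPath src tgt v s) :
    ∃ m > 0, SReach src tgt s (restrictS s c + m • betaS src tgt s) (restrictS s c) := by
  obtain ⟨l, hl_ne, hl⟩ := hc.exists_legalSeq_self
  obtain ⟨v, hv⟩ := List.exists_mem_of_ne_nil l hl_ne
  exact ⟨l.count s, List.count_pos_iff.2 (hl.mem_of_hasPath hv (hs v)), hl.sReach_restrictS s⟩

end Restriction

section Level

omit [DecidableEq E]

variable {src tgt : E → V} {s v : V} {c d : V → ℕ}

theorem sum_numEdges (src tgt : E → V) (v : V) :
    ∑ w, numEdges src tgt v w = outdeg src v := by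
  simp only [numEdges, outdeg, ← filter_filter]
  exact (card_eq_sum_card_fiberwise fun _ _ => mem_coe.2 (mem_univ _)).symm

theorem lvl_fire (h : outdeg src v ≤ c v) : lvl (fire src tgt c v) = lvl c := by
  have hsum := congrArg lvl (fire_add_single (tgt := tgt) h)
  simpa [lvl, sum_add_distrib, sum_numEdges] using hsum

theorem Reach.lvl_eq (h : Reach src tgt c d) : lvl d = lvl c := by
  induction h with
  | refl => rfl
  | tail _ hstep ih =>
    obtain ⟨v, hv, rfl⟩ := hstep
    rw [lvl_fire hv, ih]

omit [Fintype E] in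
theorem lvl_eq_add_sum_restrictS (s : V) (c : V → ℕ) :
    lvl c = c s + ∑ v, restrictS s c v :=
  Fintype.sum_eq_add_sum_subtype_ne c s

omit [Fintype E] [DecidableEq V] in
theorem eq_of_restrictS_eq_of_lvl_eq (hr : restrictS s c = restrictS s d) (hl : lvl c = lvl d) :
    c = d := by
  classical
  have hs : c s = d s := by
    rw [lvl_eq_add_sum_restrictS s c, lvl_eq_add_sum_restrictS s d, hr] at hl
    exact Nat.add_right_cancel hl
  rw [← extendS_restrictS_add s c, ← extendS_restrictS_add s d, hr, hs]

theorem SReach.sum_le {a b : {v : V // v ≠ s} → ℕ} (h : SReach src tgt s a b) :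
    ∑ v, b v ≤ ∑ v, a v := by
  rw [← restrictS_extendS a] at h
  obtain ⟨d, hd, rfl⟩ := h.exists_reach
  have hlvl := hd.lvl_eq
  have hzero : extendS s a s = 0 := dif_pos rfl
  rw [lvl_eq_add_sum_restrictS s d, lvl_eq_add_sum_restrictS s (extendS s a), restrictS_extendS,
    hzero] at hlvl
  omega

end Level

section Stabilization

omit [Fintype V] [DecidableEq E]

variable [Finite V] {src tgt : E → V} {s : V}

theorem finite_setOf_sReach (a : {v : V // v ≠ s} → ℕ) : {b | SReach src tgt s a b}.Finite := by
  cases nonempty_fintype V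
  refine (Set.finite_Icc 0 fun _ => ∑ v, a v).subset fun b hb => ⟨zero_le, fun v => ?_⟩
  exact (single_le_sum_of_canonicallyOrdered (mem_univ v)).trans (SReach.sum_le hb)

theorem not_transGen_sFireStep_self (hs : ∀ v, HasPath src tgt v s) (a : {v : V // v ≠ s} → ℕ) :
    ¬ Relation.TransGen (SFireStep src tgt s) a a := by
  cases nonempty_fintype V
  intro h
  obtain ⟨-, ⟨v, hv, rfl⟩, hback⟩ := Relation.TransGen.head'_iff.1 h
  obtain ⟨l, hl⟩ := SReach.exists_sLegalSeq hback
  have hloop : SLegalSeq src tgt s (v :: l) (restrictS s (extendS s a)) a := by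
    rw [restrictS_extendS]
    exact ⟨hv, hl⟩
  obtain ⟨d, hd, hda⟩ := hloop.exists_legalSeq
  obtain rfl : d = extendS s a :=
    eq_of_restrictS_eq_of_lvl_eq (hda.trans (restrictS_extendS a).symm)
      (reach_iff_exists_legalSeq.2 ⟨_, hd⟩).lvl_eq
  obtain ⟨u, -, hu⟩ := List.mem_map.1 (hd.mem_of_hasPath List.mem_cons_self (hs v))
  exact u.2 hu

theorem exists_sReach_sStable (hs : ∀ v, HasPath src tgt v s) (a : {v : V // v ≠ s} → ℕ) :
    ∃ b, SReach src tgt s a b ∧ SStable src s b := by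
  let r := Function.swap (Relation.TransGen (SFireStep src tgt s))
  have : IsStrictOrder _ r :=
    { irrefl := not_transGen_sFireStep_self hs
      trans := fun _ _ _ hab hbc => hbc.trans hab }
  have hwf : {b | SReach src tgt s a b}.WellFoundedOn r := (finite_setOf_sReach a).wellFoundedOn
  obtain ⟨⟨b, hb⟩, -, hmin⟩ := hwf.has_min Set.univ ⟨⟨a, .refl⟩, trivial⟩
  refine ⟨b, hb, fun v => not_le.1 fun hv => ?_⟩
  have hstep : SFireStep src tgt s b (sfire src tgt s b v) := ⟨v, hv, rfl⟩
  exact hmin ⟨_, hb.tail hstep⟩ trivial (.single hstep)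

theorem sReach_stab (hs : ∀ v, HasPath src tgt v s) (a : {v : V // v ≠ s} → ℕ) :
    SReach src tgt s a (stab src tgt s a) :=
  (Classical.epsilon_spec (exists_sReach_sStable hs a)).1

theorem sStable_stab (hs : ∀ v, HasPath src tgt v s) (a : {v : V // v ≠ s} → ℕ) :
    SStable src s (stab src tgt s a) :=
  (Classical.epsilon_spec (exists_sReach_sStable hs a)).2

end Stabilization

section SRecurrence

omit [Fintype V] [DecidableEq E]

variable {src tgt : E → V} {s : V}

theorem exists_sReach_nsmul_betaS_pos {w : V} (hw : HasPath src tgt s w) (hws : w ≠ s) :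
    ∃ (n : ℕ) (b : {v : V // v ≠ s} → ℕ),
      SReach src tgt s (n • betaS src tgt s) b ∧ 0 < b ⟨w, hws⟩ := by
  induction hw with
  | refl => exact absurd rfl hws
  | tail _ he ih =>
    obtain ⟨e, rfl, rfl⟩ := he
    have hedge := numEdges_src_tgt_pos src tgt e
    by_cases hv : src e = s
    · exact ⟨1, betaS src tgt s, by rw [one_nsmul]; exact .refl, by rwa [hv] at hedge⟩
    obtain ⟨n, b, hb, hpos⟩ := ih hv
    rcases eq_or_ne (tgt e) (src e) with hloop | hne
    · exact ⟨n, b, hb, by simpa only [hloop] using hpos⟩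
    -- As many copies of `b` as `src e` has outgoing edges make `src e` legal to fire.
    · have hscaled := hb.nsmul (outdeg src (src e))
      rw [← mul_nsmul'] at hscaled
      refine ⟨_, _, hscaled.tail ⟨⟨src e, hv⟩, Nat.le_mul_of_pos_right _ hpos, rfl⟩, ?_⟩
      rw [sfire_apply_of_ne _ (Subtype.coe_ne_coe.1 hne)]
      exact Nat.add_pos_right _ hedge

theorem exists_sReach_nsmul_betaS_ge [Finite V] (hs : ∀ w, HasPath src tgt s w)
    (a : {v : V // v ≠ s} → ℕ) :
    ∃ (n : ℕ) (b : {v : V // v ≠ s} → ℕ), SReach src tgt s (n • betaS src tgt s) b ∧ a ≤ b := by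
  cases nonempty_fintype V
  choose n b hb hpos using fun w : {v : V // v ≠ s} => exists_sReach_nsmul_betaS_pos (hs w) w.2
  refine ⟨∑ w, a w * n w, ∑ w, a w • b w, ?_, fun w => ?_⟩
  · simpa only [sum_smul, mul_smul] using SReach.sum (t := univ) fun w => (hb w).nsmul (a w)
  · calc a w ≤ (a w • b w) w := Nat.le_mul_of_pos_right _ (hpos w)
      _ ≤ ∑ u, (a u • b u) w :=
        single_le_sum_of_canonicallyOrdered (f := fun u => (a u • b u) w) (mem_univ w)
      _ = (∑ u, a u • b u) w := (Finset.sum_apply w univ _).symm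

theorem SStable.sRecurrent_of_sReach [Finite V] {a : {v : V // v ≠ s} → ℕ} (ha : SStable src s a)
    (hs : ∀ w, HasPath src tgt s w) {m : ℕ} (hm : 0 < m)
    (h : SReach src tgt s (a + m • betaS src tgt s) a) : SRecurrent src tgt s a := by
  intro a₁
  obtain ⟨n, b, hb, hle⟩ := exists_sReach_nsmul_betaS_ge hs a₁
  have hle' : a₁ ≤ m • b := hle.trans fun w => Nat.le_mul_of_pos_left _ hm
  have hspread : SReach src tgt s (n • m • betaS src tgt s + a) (m • b + a) := by
    rw [nsmul_left_comm]
    exact (hb.nsmul m).add_right a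
  have habsorb : SReach src tgt s (n • m • betaS src tgt s + a) a := by
    rw [add_comm]
    exact h.add_nsmul n
  refine ⟨m • b - a₁ + a, ?_⟩
  rw [← add_assoc, add_tsub_cancel_of_le hle']
  exact (hspread.of_sStable habsorb ha).stab_eq ha

theorem Recurrent.sRecurrent_restrictS [Finite V] {c : V → ℕ} (hc : Recurrent src tgt c)
    (hG : StronglyConnected src tgt) (hstable : SStable src s (restrictS s c)) :
    SRecurrent src tgt s (restrictS s c) := by
  obtain ⟨m, hm, h⟩ := hc.exists_sReach_add_nsmul_betaS fun v => hG v s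
  exact hstable.sRecurrent_of_sReach (hG s) hm h

end SRecurrence

section Index

omit [DecidableEq E]

variable {src tgt : E → V} {c : V → ℕ}

omit [Fintype V] in
theorem Recurrent.sIndex_restrictS_le (hc : Recurrent src tgt c) (s : V) :
    sIndex src tgt s (restrictS s c) ≤ c s := by
  refine Nat.sInf_le ?_
  rwa [Set.mem_ofPred_eq, extendS_restrictS_add]

omit [Fintype V] in
theorem Recurrent.exists_phi_restrictS_add (hc : Recurrent src tgt c) (s : V) :
    ∃ t : ℕ, phi src tgt s (restrictS s c) + t • deltaS s = c := by
  refine ⟨c s - sIndex src tgt s (restrictS s c), ?_⟩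
  rw [phi, add_assoc, ← add_nsmul, Nat.add_sub_cancel' (hc.sIndex_restrictS_le s),
    extendS_restrictS_add]

theorem Recurrent.slvl_restrictS_le_lvl (hc : Recurrent src tgt c) (s : V) :
    slvl src tgt s (restrictS s c) ≤ lvl c := by
  rw [slvl, lvl_eq_add_sum_restrictS s c]
  exact Nat.add_le_add_right (hc.sIndex_restrictS_le s) _

end Index

/-- For a recurrent `c`: `(ĉ)°` is s-recurrent, `c ~ φ((ĉ)°) + t·δ_s`
for some `t ∈ ℕ`, and `lvl(c) ≥ slvl((ĉ)°)`. -/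
theorem level_ge_slvl_of_recurrent [Nonempty V] (src tgt : E → V)
    (hG : StronglyConnected src tgt) (s : V) (c : V → ℕ) (hc : Recurrent src tgt c) :
    SRecurrent src tgt s (stab src tgt s (restrictS s c)) ∧
    (∃ t : ℕ, Reach src tgt c
      (phi src tgt s (stab src tgt s (restrictS s c)) + t • deltaS s)) ∧
    slvl src tgt s (stab src tgt s (restrictS s c)) ≤ lvl c := by
  have hs : ∀ v, HasPath src tgt v s := fun v => hG v s
  obtain ⟨d, hcd, hd⟩ := (sReach_stab hs (restrictS s c)).exists_reach
  have hstable : SStable src s (restrictS s d) := hd ▸ sStable_stab hs (restrictS s c)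
  have hrec : Recurrent src tgt d := hc.of_reach hcd
  obtain ⟨t, ht⟩ := hrec.exists_phi_restrictS_add s
  rw [← hd, ← hcd.lvl_eq]
  exact ⟨hrec.sRecurrent_restrictS hG hstable, ⟨t, ht.symm ▸ hcd⟩, hrec.slvl_restrictS_le_lvl s⟩

end SandpileBM
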